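/- arXiv:math/0303285 — 2 statements merged into one kernel-verified Lean document; each statement's English description precedes it below -/
import Mathlib

section
/- For all B-modules V and W (viewed also as A-modules via the quotient map A → B) and all integers n ≥ 0, the natural map Ext^n_B(V, W) → Ext^n_A(V, W) induced by restriction of scalars along A → B is an isomorphism of abelian groups. -/
universe u

open CategoryTheory Abelian

noncomputable instance moduleCatHasDerivedCategory (R : Type u) [Ring R] :
    HasDerivedCategory (ModuleCat.{u} R) :=
  HasDerivedCategory.standard _

instance moduleCatHasExt (R : Type u) [Ring R] : HasExt.{u + 1} (ModuleCat.{u} R) :=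
  hasExt_of_hasDerivedCategory _

variable {R₁ R₂ : Type u} [Ring R₁] [Ring R₂] (f : R₁ →+* R₂)

instance : (ModuleCat.restrictScalars.{u} f).Additive := ⟨rfl⟩

noncomputable instance : Limits.PreservesFiniteLimits (ModuleCat.restrictScalars.{u} f) :=
  ⟨fun _ _ _ => ⟨fun {F} => ModuleCat.preservesLimit_restrictScalars f F⟩⟩

noncomputable instance : Limits.PreservesFiniteColimits (ModuleCat.restrictScalars.{u} f) :=
  ⟨fun _ _ _ => ⟨fun {F} => ModuleCat.preservesColimit_restrictScalars f F⟩⟩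

/-- The compatibility isomorphism between `F.mapDerivedCategory` and the
single-object functors, for an exact functor `F`. -/
noncomputable def mapDerivedCategorySingleIso {C₁ C₂ : Type*} [Category C₁] [Category C₂]
    [Abelian C₁] [Abelian C₂] [HasDerivedCategory C₁] [HasDerivedCategory C₂]
    (F : C₁ ⥤ C₂) [F.Additive] [Limits.PreservesFiniteLimits F]
    [Limits.PreservesFiniteColimits F] (V : C₁) :
    F.mapDerivedCategory.obj ((DerivedCategory.singleFunctor C₁ 0).obj V) ≅
      (DerivedCategory.singleFunctor C₂ 0).obj (F.obj V) :=
  F.mapDerivedCategory.mapIso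
      (((SingleFunctors.evaluation _ _ (0 : ℤ)).mapIso
        (DerivedCategory.singleFunctorsPostcompQIso C₁)).app V) ≪≫
    F.mapDerivedCategoryFactors.app _ ≪≫
    DerivedCategory.Q.mapIso
      ((HomologicalComplex.singleMapHomologicalComplex F (ComplexShape.up ℤ) 0).app V) ≪≫
    (((SingleFunctors.evaluation _ _ (0 : ℤ)).mapIso
      (DerivedCategory.singleFunctorsPostcompQIso C₂)).app (F.obj V)).symm

/-- The natural map `Ext^n_{R₂}(V, W) → Ext^n_{R₁}(V, W)` induced by restriction
of scalars along a ring homomorphism `f : R₁ →+* R₂`. -/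
noncomputable def extRestrict {n : ℕ} {V W : ModuleCat.{u} R₂}
    (α : Abelian.Ext V W n) :
    Abelian.Ext ((ModuleCat.restrictScalars f).obj V)
      ((ModuleCat.restrictScalars f).obj W) n :=
  Abelian.Ext.homEquiv.symm <|
    (mapDerivedCategorySingleIso (ModuleCat.restrictScalars f) V).inv ≫
      (ModuleCat.restrictScalars f).mapDerivedCategory.map α.hom ≫
      (((ModuleCat.restrictScalars f).mapDerivedCategory.commShiftIso (n : ℤ)).hom.app
        ((DerivedCategory.singleFunctor (ModuleCat.{u} R₂) 0).obj W)) ≫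
      ((mapDerivedCategorySingleIso (ModuleCat.restrictScalars f) W).hom)⟦(n : ℤ)⟧'

/-! Context: `A` a ring, `I` a two-sided idempotent ideal of `A` which is
projective as a left `A`-module, `B := A / I` the quotient ring. -/

/-- The quotient ring `B = A / I`. -/
def QuotByIdeal (A : Type u) [Ring A] (I : Ideal A) : Type u :=
  RingQuot (fun a b : A => a ∈ I ∧ b = 0)

noncomputable instance (A : Type u) [Ring A] (I : Ideal A) : Ring (QuotByIdeal A I) :=
  inferInstanceAs (Ring (RingQuot _))

/-- The quotient map `A → B = A / I`. -/
noncomputable def quotByIdealProj (A : Type u) [Ring A] (I : Ideal A) :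
    A →+* QuotByIdeal A I :=
  RingQuot.mkRingHom _

/-!
By dimension shifting, an exact fully faithful functor `F` induces bijections
`Ext^n(X, Y) → Ext^n(F X, F Y)` as soon as every object is a quotient of some `P` such that
`Ext^k(P, Y)` and `Ext^k(F P, F Y)` vanish for all `k > 0`. For restriction of scalars along a
surjection `f : R₁ → R₂` with kernel `K`, free modules `P = R₂^(ι)` qualify: when `K` is
projective, `0 → K^(ι) → R₁^(ι) → R₂^(ι) → 0` is a projective resolution over `R₁`, and
`Hom(K, Y) = 0` because `K = K²` and `K` annihilates `Y`.
-/

lemma evaluation_mapIso_singleFunctorsPostcompQIso {C : Type*} [Category C] [Abelian C]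
    [HasDerivedCategory C] (n : ℤ) :
    (SingleFunctors.evaluation _ _ n).mapIso (DerivedCategory.singleFunctorsPostcompQIso C) =
      DerivedCategory.singleFunctorIsoCompQ C n :=
  Iso.ext (DerivedCategory.singleFunctorsPostcompQIso_hom_hom C n)

section MapExt

variable {C D : Type*} [Category C] [Category D] [Abelian C] [Abelian D]
  (F : C ⥤ D) [F.Additive] [Limits.PreservesFiniteLimits F] [Limits.PreservesFiniteColimits F]

lemma mapDerivedCategorySingleIso_eq_app [HasDerivedCategory C] [HasDerivedCategory D] (X : C) :
    mapDerivedCategorySingleIso F X = (F.mapDerivedCategorySingleFunctor 0).app X := by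
  ext
  rw [mapDerivedCategorySingleIso, evaluation_mapIso_singleFunctorsPostcompQIso,
    evaluation_mapIso_singleFunctorsPostcompQIso]
  -- Both composites agree up to the identity components of associators.
  change _ = F.mapDerivedCategory.map _ ≫ 𝟙 _ ≫ F.mapDerivedCategoryFactors.hom.app _ ≫ 𝟙 _ ≫
    DerivedCategory.Q.map _ ≫ 𝟙 _ ≫ (DerivedCategory.singleFunctorIsoCompQ D 0).inv.app _
  simp only [Category.id_comp]
  rfl

lemma mapExtAddHom_zero_bijective [HasExt C] [HasExt D] [F.Full] [F.Faithful] (X Y : C) :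
    Function.Bijective (F.mapExtAddHom X Y 0) := by
  rw [Functor.mapExtAddHom_coe, Ext.mapExactFunctor₀]
  exact Ext.homEquiv₀.symm.bijective.comp
    (((Functor.FullyFaithful.ofFullyFaithful F).map_bijective X Y).comp Ext.homEquiv₀.bijective)

lemma mapExtAddHom_succ_bijective_of_shortExact [HasExt C] [HasExt D] {S : ShortComplex C}
    (hS : S.ShortExact) (Y : C) (n : ℕ)
    (hSX₂ : Subsingleton (Ext S.X₂ Y (n + 1)))
    (hFX₂ : Subsingleton (Ext (F.obj S.X₂) (F.obj Y) (n + 1)))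
    (hX₁ : Function.Bijective (F.mapExtAddHom S.X₁ Y n))
    (hX₂ : Function.Surjective (F.mapExtAddHom S.X₂ Y n)) :
    Function.Bijective (F.mapExtAddHom S.X₃ Y (n + 1)) := by
  have hFS : (S.map F).ShortExact := hS.map_of_exact F
  have hn : 1 + n = n + 1 := add_comm 1 n
  have mk₀_comm (α : Ext S.X₂ Y n) :
      (Ext.mk₀ (F.map S.f)).comp (α.mapExactFunctor F) (zero_add n) =
        ((Ext.mk₀ S.f).comp α (zero_add n)).mapExactFunctor F := by
    rw [Ext.mapExactFunctor_comp, Ext.mapExactFunctor_mk₀]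
  have extClass_comm (α : Ext S.X₁ Y n) :
      hFS.extClass.comp (α.mapExactFunctor F) hn =
        (hS.extClass.comp α hn).mapExactFunctor F := by
    rw [Ext.mapExactFunctor_comp, Ext.mapExactFunctor_extClass]
    rfl
  exact AddMonoidHom.bijective_of_surjective_of_bijective_of_right_exact _ _ _ _ _ _ _
    (AddMonoidHom.ext mk₀_comm) (AddMonoidHom.ext extClass_comm)
    ((ShortComplex.ab_exact_iff_function_exact _).mp
      (Ext.contravariant_sequence_exact₁' hS Y n (n + 1) hn))
    ((ShortComplex.ab_exact_iff_function_exact _).mp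
      (Ext.contravariant_sequence_exact₁' hFS (F.obj Y) n (n + 1) hn))
    hX₂ hX₁
    (fun α ↦ Ext.contravariant_sequence_exact₃ hS Y α (hSX₂.elim _ _) hn)
    (fun β ↦ Ext.contravariant_sequence_exact₃ hFS (F.obj Y) β (hFX₂.elim _ _) hn)

theorem mapExtAddHom_bijective_of_exists_acyclic_epi [HasExt C] [HasExt D] [F.Full] [F.Faithful]
    (Y : C) (hY : ∀ X : C, ∃ (P : C) (π : P ⟶ X), Epi π ∧ ∀ n : ℕ,
      Subsingleton (Ext P Y (n + 1)) ∧ Subsingleton (Ext (F.obj P) (F.obj Y) (n + 1)))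
    (X : C) (n : ℕ) : Function.Bijective (F.mapExtAddHom X Y n) := by
  induction n generalizing X with
  | zero => exact mapExtAddHom_zero_bijective F X Y
  | succ n ih =>
    obtain ⟨P, π, _, hP⟩ := hY X
    have hS : (ShortComplex.mk _ π (Limits.kernel.condition π)).ShortExact :=
      { exact := ShortComplex.exact_kernel π }
    exact mapExtAddHom_succ_bijective_of_shortExact F hS Y n (hP n).1 (hP n).2 (ih _)
      (ih _).surjective

end MapExt

section Acyclic

variable {C : Type*} [Category C] [Abelian C] [HasExt C]

lemma ext_subsingleton_of_shortExact {S : ShortComplex C} (hS : S.ShortExact) (Y : C) (n : ℕ)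
    [Subsingleton (Ext S.X₁ Y n)] [Subsingleton (Ext S.X₂ Y (n + 1))] :
    Subsingleton (Ext S.X₃ Y (n + 1)) := by
  refine subsingleton_of_forall_eq 0 fun α ↦ ?_
  obtain ⟨β, rfl⟩ :=
    Ext.contravariant_sequence_exact₃ hS Y α (Subsingleton.elim _ _) (add_comm 1 n)
  rw [Subsingleton.elim β 0, Ext.comp_zero]

lemma ext_subsingleton_of_projective_of_hom (X Y : C) [Projective X] [Subsingleton (X ⟶ Y)]
    (n : ℕ) : Subsingleton (Ext X Y n) := by
  cases n with
  | zero => exact Ext.homEquiv₀.subsingleton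
  | succ n => exact Ext.subsingleton_of_projective X Y n

end Acyclic

lemma extRestrict_eq_mapExtAddHom {n : ℕ} {V W : ModuleCat.{u} R₂} (α : Ext V W n) :
    extRestrict f α = (ModuleCat.restrictScalars f).mapExtAddHom V W n α := by
  apply Ext.homEquiv.injective
  rw [extRestrict, Equiv.apply_symm_apply, mapDerivedCategorySingleIso_eq_app,
    mapDerivedCategorySingleIso_eq_app, Functor.mapExtAddHom_apply]
  refine Eq.trans ?_ (Ext.mapExactFunctor_hom (ModuleCat.restrictScalars f) α).symm
  simp [ShiftedHom.map]

lemma restrictScalars_full_of_surjective (hf : Function.Surjective f) :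
    (ModuleCat.restrictScalars.{u} f).Full where
  map_surjective {M N} g := by
    refine ⟨ModuleCat.ofHom { toFun := g.hom, map_add' := map_add g.hom, map_smul' := ?_ }, rfl⟩
    intro b x
    obtain ⟨a, rfl⟩ := hf b
    exact g.hom.map_smul a x

lemma linearMap_eq_zero_of_isIdempotentElem {R N : Type*} [Ring R] [AddCommGroup N] [Module R N]
    {I : Ideal R} (hI : IsIdempotentElem I) (hN : I ≤ Module.annihilator R N) (g : I →ₗ[R] N) :
    g = 0 := by
  have mul_le_ker : I * I ≤ (LinearMap.ker g).map I.subtype := by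
    refine Ideal.mul_le.mpr fun p hp q hq ↦ ⟨p • ⟨q, hq⟩, ?_, rfl⟩
    rw [SetLike.mem_coe, LinearMap.mem_ker, map_smul, Module.mem_annihilator.mp (hN hp)]
  ext ⟨x, hx⟩
  obtain ⟨y, hy, rfl⟩ := mul_le_ker (hI.eq.symm ▸ hx)
  exact hy

lemma exact_mapRange_ker_subtype {R S M N : Type*} [Ring R] [Ring S] {σ : R →+* S} [AddCommGroup M]
    [AddCommGroup N] [Module R M] [Module S N] (g : M →ₛₗ[σ] N) (ι : Type*) :
    Function.Exact (Finsupp.mapRange.linearMap (α := ι) (LinearMap.ker g).subtype)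
      (Finsupp.mapRange.linearMap (α := ι) g) := by
  intro x
  rw [← LinearMap.coe_range, Finsupp.range_mapRange_linearMap _ (Submodule.ker_subtype _),
    Submodule.range_subtype]
  simp [Finsupp.ext_iff]

/-- The sequence `K^(ι) → R₁^(ι) → R₂^(ι)` of `R₁`-modules, where `K` is the kernel of `f`. It
computes `Ext` groups out of the free `R₂`-module on `ι`, seen as an `R₁`-module. -/
noncomputable def freeKernelSequence (ι : Type u) : ShortComplex (ModuleCat.{u} R₁) where
  X₁ := ModuleCat.of R₁ (ι →₀ RingHom.ker f)
  X₂ := ModuleCat.of R₁ (ι →₀ R₁)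
  X₃ := (ModuleCat.restrictScalars f).obj (ModuleCat.of R₂ (ι →₀ R₂))
  f := ModuleCat.ofHom (Finsupp.mapRange.linearMap (RingHom.ker f).subtype)
  g := ModuleCat.semilinearMapAddEquiv f (ModuleCat.of R₁ (ι →₀ R₁)) (ModuleCat.of R₂ (ι →₀ R₂))
    (Finsupp.mapRange.linearMap f.toSemilinearMap)
  zero := by
    ext1
    exact LinearMap.ext (exact_mapRange_ker_subtype f.toSemilinearMap ι).apply_apply_eq_zero

lemma freeKernelSequence_shortExact (hf : Function.Surjective f) (ι : Type u) :
    (freeKernelSequence f ι).ShortExact where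
  exact := (ShortComplex.ShortExact.moduleCat_exact_iff_function_exact _).mpr
    (exact_mapRange_ker_subtype f.toSemilinearMap ι)
  mono_f := (ModuleCat.mono_iff_injective _).mpr
    (Finsupp.mapRange_injective _ rfl (Submodule.injective_subtype _))
  epi_g := (ModuleCat.epi_iff_surjective _).mpr (Finsupp.mapRange_surjective _ (map_zero f) hf)

lemma finsupp_projective {R M : Type*} [Ring R] [AddCommGroup M] [Module R M] (ι : Type*)
    [Module.Projective R M] : Module.Projective R (ι →₀ M) := by
  classical
  exact .of_equiv (finsuppLequivDFinsupp R).symm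

lemma ker_le_annihilator_restrictScalars (N : ModuleCat.{u} R₂) :
    RingHom.ker f ≤ Module.annihilator R₁ ((ModuleCat.restrictScalars f).obj N) := by
  intro a ha
  rw [Module.mem_annihilator]
  intro x
  rw [ModuleCat.restrictScalars.smul_def, RingHom.mem_ker.mp ha]
  exact zero_smul R₂ (x : N)

lemma freeKernelSequence_X₁_hom_subsingleton (hker : IsIdempotentElem (RingHom.ker f)) (ι : Type u)
    (W : ModuleCat.{u} R₂) :
    Subsingleton ((freeKernelSequence f ι).X₁ ⟶ (ModuleCat.restrictScalars f).obj W) := by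
  refine subsingleton_of_forall_eq 0 fun g ↦ ModuleCat.hom_ext (Finsupp.lhom_ext' fun i ↦ ?_)
  exact linearMap_eq_zero_of_isIdempotentElem hker (ker_le_annihilator_restrictScalars f W) _

lemma ext_restrictScalars_free_subsingleton (hf : Function.Surjective f)
    (hker : IsIdempotentElem (RingHom.ker f)) [Module.Projective R₁ (RingHom.ker f)] (ι : Type u)
    (W : ModuleCat.{u} R₂) (n : ℕ) :
    Subsingleton (Ext ((ModuleCat.restrictScalars f).obj (ModuleCat.of R₂ (ι →₀ R₂)))
      ((ModuleCat.restrictScalars f).obj W) (n + 1)) := by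
  let S := freeKernelSequence f ι
  let W₁ := (ModuleCat.restrictScalars f).obj W
  have : Projective S.X₁ := (IsProjective.iff_projective _).mp (finsupp_projective ι)
  have : Projective S.X₂ := ModuleCat.projective_of_free Finsupp.basisSingleOne
  have : Subsingleton (S.X₁ ⟶ W₁) := freeKernelSequence_X₁_hom_subsingleton f hker ι W
  have : Subsingleton (Ext S.X₁ W₁ n) := ext_subsingleton_of_projective_of_hom S.X₁ W₁ n
  have : Subsingleton (Ext S.X₂ W₁ (n + 1)) := Ext.subsingleton_of_projective S.X₂ W₁ n
  exact ext_subsingleton_of_shortExact (freeKernelSequence_shortExact f hf ι) W₁ n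

theorem mapExtAddHom_restrictScalars_bijective (hf : Function.Surjective f)
    (hker : IsIdempotentElem (RingHom.ker f)) [Module.Projective R₁ (RingHom.ker f)]
    (V W : ModuleCat.{u} R₂) (n : ℕ) :
    Function.Bijective ((ModuleCat.restrictScalars f).mapExtAddHom V W n) := by
  have := restrictScalars_full_of_surjective f hf
  refine mapExtAddHom_bijective_of_exists_acyclic_epi _ W (fun M ↦ ?_) V n
  have : Projective (ModuleCat.of R₂ (M →₀ R₂)) :=
    ModuleCat.projective_of_free Finsupp.basisSingleOne
  refine ⟨ModuleCat.of R₂ (M →₀ R₂), ModuleCat.ofHom (Finsupp.linearCombination R₂ id),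
    (ModuleCat.epi_iff_surjective _).mpr (Finsupp.linearCombination_id_surjective R₂ M),
    fun k ↦ ⟨Ext.subsingleton_of_projective _ _ k,
      ext_restrictScalars_free_subsingleton f hf hker M W k⟩⟩

lemma ker_quotByIdealProj {A : Type u} [Ring A] (I : Ideal A) [I.IsTwoSided] :
    RingHom.ker (quotByIdealProj A I) = I := by
  apply le_antisymm
  · intro a ha
    have mk_eq_zero {x y : A} (h : x ∈ I ∧ y = 0) :
        Ideal.Quotient.mk I x = Ideal.Quotient.mk I y := by
      rw [h.2, map_zero, Ideal.Quotient.eq_zero_iff_mem]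
      exact h.1
    rw [← Ideal.Quotient.eq_zero_iff_mem, ← RingQuot.lift_mkRingHom_apply _ @mk_eq_zero,
      show RingQuot.mkRingHom _ a = 0 from ha, map_zero]
  · intro a ha
    exact (RingQuot.mkRingHom_rel ⟨ha, rfl⟩).trans (map_zero _)

lemma isIdempotentElem_of_span_mul_eq {R : Type*} [Ring R] {I : Ideal R}
    (hI : Submodule.span R {z : R | ∃ p ∈ I, ∃ q ∈ I, z = p * q} = I) : IsIdempotentElem I := by
  refine le_antisymm Ideal.mul_le_right ?_
  nth_rw 1 [← hI]
  rw [Submodule.span_le]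
  rintro _ ⟨p, hp, q, hq, rfl⟩
  exact Ideal.mul_mem_mul hp hq

/-- **Extension compatibility.**  Let `A` be a ring and `I` a two-sided ideal
which is idempotent (`I·I = I`) and projective as a left `A`-module, and let
`B := A / I`.  Then for all `B`-modules `V`, `W` and all `n ≥ 0`, the natural
map `Ext^n_B(V, W) → Ext^n_A(V, W)` induced by restriction of scalars along
`A → B` is an isomorphism of abelian groups. -/
theorem ext_restriction_bijective (A : Type u) [Ring A] (I : Ideal A)
    (htwosided : ∀ x ∈ I, ∀ a : A, x * a ∈ I)
    (hidem : Submodule.span A {z : A | ∃ p ∈ I, ∃ q ∈ I, z = p * q} = I)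
    (hproj : Module.Projective A ↥I)
    (V W : ModuleCat.{u} (QuotByIdeal A I)) (n : ℕ) :
    Function.Bijective
        (fun α : Abelian.Ext V W n => extRestrict (quotByIdealProj A I) α) ∧
      ∀ α β : Abelian.Ext V W n,
        extRestrict (quotByIdealProj A I) (α + β) =
          extRestrict (quotByIdealProj A I) α + extRestrict (quotByIdealProj A I) β := by
  have : I.IsTwoSided := ⟨fun {x} a hx ↦ htwosided x hx a⟩
  have hker : RingHom.ker (quotByIdealProj A I) = I := ker_quotByIdealProj I
  have : Module.Projective A (RingHom.ker (quotByIdealProj A I)) := by rwa [hker]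
  have hker_idem : IsIdempotentElem (RingHom.ker (quotByIdealProj A I)) := by
    rw [hker]
    exact isIdempotentElem_of_span_mul_eq hidem
  have hsurj : Function.Surjective (quotByIdealProj A I) := RingQuot.mkRingHom_surjective _
  simp only [extRestrict_eq_mapExtAddHom]
  exact ⟨mapExtAddHom_restrictScalars_bijective _ hsurj hker_idem V W n, map_add _⟩
end

section
/- The images of the six elements e, f, a, b, c, b² form a basis of A as a K-module; in particular A is a free K-module of rank 6. -/
universe u

open CategoryTheory

/-- The five generators of the quiver algebra: two vertices `e`, `f`, arrows
`a : e → f`, `c : f → e` and a loop `b` at `e`. -/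
inductive QGen : Type
  | e | f | a | b | c

/-- The defining relations of the quiver algebra. -/
inductive qRel (K : Type u) [CommRing K] (z : K) :
    FreeAlgebra K QGen → FreeAlgebra K QGen → Prop
  | idem_e : qRel K z (FreeAlgebra.ι K QGen.e * FreeAlgebra.ι K QGen.e)
      (FreeAlgebra.ι K QGen.e)
  | idem_f : qRel K z (FreeAlgebra.ι K QGen.f * FreeAlgebra.ι K QGen.f)
      (FreeAlgebra.ι K QGen.f)
  | ef : qRel K z (FreeAlgebra.ι K QGen.e * FreeAlgebra.ι K QGen.f) 0
  | fe : qRel K z (FreeAlgebra.ι K QGen.f * FreeAlgebra.ι K QGen.e) 0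
  | sum : qRel K z (FreeAlgebra.ι K QGen.e + FreeAlgebra.ι K QGen.f) 1
  | a_sandwich : qRel K z (FreeAlgebra.ι K QGen.a)
      (FreeAlgebra.ι K QGen.f * FreeAlgebra.ι K QGen.a * FreeAlgebra.ι K QGen.e)
  | c_sandwich : qRel K z (FreeAlgebra.ι K QGen.c)
      (FreeAlgebra.ι K QGen.e * FreeAlgebra.ι K QGen.c * FreeAlgebra.ι K QGen.f)
  | b_sandwich : qRel K z (FreeAlgebra.ι K QGen.b)
      (FreeAlgebra.ι K QGen.e * FreeAlgebra.ι K QGen.b * FreeAlgebra.ι K QGen.e)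
  | ab : qRel K z (FreeAlgebra.ι K QGen.a * FreeAlgebra.ι K QGen.b) 0
  | bc : qRel K z (FreeAlgebra.ι K QGen.b * FreeAlgebra.ι K QGen.c) 0
  | ac : qRel K z (FreeAlgebra.ι K QGen.a * FreeAlgebra.ι K QGen.c)
      (z • FreeAlgebra.ι K QGen.f)
  | bb_ca : qRel K z (FreeAlgebra.ι K QGen.b * FreeAlgebra.ι K QGen.b +
      FreeAlgebra.ι K QGen.c * FreeAlgebra.ι K QGen.a)
      (z • FreeAlgebra.ι K QGen.e)

/-- The quiver algebra `A` of the example: the path algebra of the quiver with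
vertices `e`, `f`, arrows `a : e → f`, `c : f → e` and loop `b` at `e`, modulo
the relations `0 = ab = bc = ac - z·f = b² + ca - z·e`. -/
def QuiverAlg (K : Type u) [CommRing K] (z : K) : Type u :=
  RingQuot (qRel K z)

noncomputable instance (K : Type u) [CommRing K] (z : K) : Ring (QuiverAlg K z) :=
  inferInstanceAs (Ring (RingQuot _))

noncomputable instance (K : Type u) [CommRing K] (z : K) : Algebra K (QuiverAlg K z) :=
  inferInstanceAs (Algebra K (RingQuot _))

/-- The images of the five generators in the quiver algebra. -/
noncomputable def gen (K : Type u) [CommRing K] (z : K) (g : QGen) : QuiverAlg K z :=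
  RingQuot.mkAlgHom K (qRel K z) (FreeAlgebra.ι K g)

/-!
Left multiplication by a generator sends each of `e, f, a, b, c, b²` to an explicit `K`-combination
of these six elements. Read as formulas on coordinates, these multiplications define endomorphisms
of `K⁶` which satisfy the relations of the quiver, so `K⁶` becomes a left `A`-module. The linear map
`K⁶ → A` attached to the six elements is `A`-linear and sends `v = (1, 1, 0, 0, 0, 0)` to
`e + f = 1`, so that `x ↦ x • v` is a section of it; computing `x • v` on the six elements shows
that it is a two-sided inverse.
-/

section Intertwining

variable {R A M N : Type*} [CommSemiring R] [Semiring A] [Algebra R A]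
  [AddCommMonoid M] [Module R M] [AddCommMonoid N] [Module R N] [Module A N] [IsScalarTower R A N]

theorem map_apply_eq_smul_of_adjoin_eq_top {s : Set A} (hs : Algebra.adjoin R s = ⊤)
    (ρ : A →ₐ[R] Module.End R M) (φ : M →ₗ[R] N) (hφ : ∀ g ∈ s, ∀ m, φ (ρ g m) = g • φ m)
    (x : A) (m : M) : φ (ρ x m) = x • φ m := by
  have hx : x ∈ Algebra.adjoin R s := hs ▸ Algebra.mem_top
  induction hx using Algebra.adjoin_induction generalizing m with
  | mem g hg => exact hφ g hg m
  | algebraMap r => simp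
  | add x y _ _ ihx ihy => simp [ihx, ihy, add_smul]
  | mul x y _ _ ihx ihy => simp [ihx, ihy, mul_smul]

end Intertwining

namespace QGen

/-- The source vertex of an arrow; a vertex, regarded as a path of length `0`, is its own source. -/
abbrev source : QGen → QGen
  | e | a | b => e
  | f | c => f

/-- The target vertex of an arrow; a vertex, regarded as a path of length `0`, is its own target. -/
abbrev target : QGen → QGen
  | e | b | c => e
  | f | a => f

end QGen

namespace QuiverAlg

variable (K : Type u) [CommRing K] (z : K)

/-- The quotient map from the free algebra on the generators onto the quiver algebra. -/
noncomputable def mk : FreeAlgebra K QGen →ₐ[K] QuiverAlg K z :=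
  RingQuot.mkAlgHom K (qRel K z)

theorem mk_surjective : Function.Surjective (mk K z) :=
  RingQuot.mkAlgHom_surjective K (qRel K z)

theorem adjoin_range_gen : Algebra.adjoin K (Set.range (gen K z)) = ⊤ := by
  have range_gen : Set.range (gen K z) = mk K z '' Set.range (FreeAlgebra.ι K) :=
    Set.range_comp (mk K z) (FreeAlgebra.ι K)
  rw [range_gen, ← AlgHom.map_adjoin, FreeAlgebra.adjoin_range_ι, Algebra.map_top,
    (AlgHom.range_eq_top _).2 (mk_surjective K z)]

section Relations

variable {K z}

theorem mk_ι (g : QGen) : mk K z (FreeAlgebra.ι K g) = gen K z g := rfl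

theorem mk_eq_of_qRel {x y : FreeAlgebra K QGen} (h : qRel K z x y) : mk K z x = mk K z y :=
  RingQuot.mkAlgHom_rel K h

theorem gen_e_add_gen_f : gen K z .e + gen K z .f = 1 := by
  simpa only [map_add, map_one, mk_ι] using mk_eq_of_qRel (qRel.sum (z := z))

theorem gen_a_mul_gen_b : gen K z .a * gen K z .b = 0 := by
  simpa only [map_mul, map_zero, mk_ι] using mk_eq_of_qRel (qRel.ab (z := z))

theorem gen_b_mul_gen_c : gen K z .b * gen K z .c = 0 := by
  simpa only [map_mul, map_zero, mk_ι] using mk_eq_of_qRel (qRel.bc (z := z))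

theorem gen_a_mul_gen_c : gen K z .a * gen K z .c = z • gen K z .f := by
  simpa only [map_mul, map_smul, mk_ι] using mk_eq_of_qRel (qRel.ac (z := z))

theorem gen_c_mul_gen_a : gen K z .c * gen K z .a = z • gen K z .e - gen K z .b * gen K z .b := by
  rw [eq_sub_iff_add_eq']
  simpa only [map_add, map_mul, map_smul, mk_ι] using mk_eq_of_qRel (qRel.bb_ca (z := z))

theorem isIdempotentElem_gen_e : IsIdempotentElem (gen K z .e) := by
  simpa only [IsIdempotentElem, map_mul, mk_ι] using mk_eq_of_qRel (qRel.idem_e (z := z))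

theorem isIdempotentElem_gen_f : IsIdempotentElem (gen K z .f) := by
  simpa only [IsIdempotentElem, map_mul, mk_ι] using mk_eq_of_qRel (qRel.idem_f (z := z))

theorem isIdempotentElem_gen_source (g : QGen) : IsIdempotentElem (gen K z g.source) := by
  cases g <;> first | exact isIdempotentElem_gen_e | exact isIdempotentElem_gen_f

theorem isIdempotentElem_gen_target (g : QGen) : IsIdempotentElem (gen K z g.target) := by
  cases g <;> first | exact isIdempotentElem_gen_e | exact isIdempotentElem_gen_f

theorem gen_source_mul_gen_target_of_ne {g h : QGen} (hgh : g.source ≠ h.target) :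
    gen K z g.source * gen K z h.target = 0 := by
  have ef : gen K z .e * gen K z .f = 0 := by
    simpa only [map_mul, map_zero, mk_ι] using mk_eq_of_qRel (qRel.ef (z := z))
  have fe : gen K z .f * gen K z .e = 0 := by
    simpa only [map_mul, map_zero, mk_ι] using mk_eq_of_qRel (qRel.fe (z := z))
  cases g <;> cases h <;> first | exact ef | exact fe | exact absurd rfl hgh

theorem gen_target_mul_gen_mul_gen_source (g : QGen) :
    gen K z g.target * gen K z g * gen K z g.source = gen K z g := by
  cases g <;> simp only [QGen.source, QGen.target]
  case e => rw [isIdempotentElem_gen_e.eq, isIdempotentElem_gen_e.eq]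
  case f => rw [isIdempotentElem_gen_f.eq, isIdempotentElem_gen_f.eq]
  case a => simpa only [map_mul, mk_ι] using (mk_eq_of_qRel (qRel.a_sandwich (z := z))).symm
  case b => simpa only [map_mul, mk_ι] using (mk_eq_of_qRel (qRel.b_sandwich (z := z))).symm
  case c => simpa only [map_mul, mk_ι] using (mk_eq_of_qRel (qRel.c_sandwich (z := z))).symm

theorem gen_mul_gen_of_target_eq {v g : QGen} (hv : g.target = v) :
    gen K z v * gen K z g = gen K z g := by
  subst hv
  rw [← gen_target_mul_gen_mul_gen_source g, mul_assoc,
    (isIdempotentElem_gen_target g).mul_self_mul]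

theorem gen_mul_gen_of_source_eq {v g : QGen} (hv : g.source = v) :
    gen K z g * gen K z v = gen K z g := by
  subst hv
  rw [← gen_target_mul_gen_mul_gen_source g, (isIdempotentElem_gen_source g).mul_mul_self]

theorem gen_mul_gen_of_source_ne_target {g h : QGen} (hgh : g.source ≠ h.target) :
    gen K z g * gen K z h = 0 :=
  calc gen K z g * gen K z h
      = gen K z g * (gen K z g.source * gen K z h.target) * gen K z h := by
        rw [← mul_assoc, gen_mul_gen_of_source_eq rfl, mul_assoc, gen_mul_gen_of_target_eq rfl]
    _ = 0 := by rw [gen_source_mul_gen_target_of_ne hgh, mul_zero, zero_mul]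

theorem gen_b_mul_gen_b_mul_gen_b :
    gen K z .b * (gen K z .b * gen K z .b) = z • gen K z .b :=
  calc gen K z .b * (gen K z .b * gen K z .b)
      = gen K z .b * (z • gen K z .e - gen K z .c * gen K z .a) := by
        rw [gen_c_mul_gen_a, sub_sub_cancel]
    _ = z • gen K z .b := by
        rw [mul_sub, ← mul_assoc, gen_b_mul_gen_c, zero_mul, sub_zero, mul_smul_comm,
          gen_mul_gen_of_source_eq (v := .e) rfl]

end Relations

section RegularRepresentation

/-- Left multiplication by a generator, written in the coordinates with respect to
`e, f, a, b, c, b²`. -/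
def genAction (g : QGen) : Module.End K (Fin 6 → K) where
  toFun x := match g with
    | .e => ![x 0, 0, 0, x 3, x 4, x 5]
    | .f => ![0, x 1, x 2, 0, 0, 0]
    | .a => ![0, z * x 4, x 0, 0, 0, 0]
    | .b => ![0, 0, 0, x 0 + z * x 5, 0, x 3]
    | .c => ![z * x 2, 0, 0, 0, x 1, -x 2]
  map_add' x y := by
    cases g <;> ext i <;> fin_cases i <;> simp [mul_add, add_add_add_comm, add_comm]
  map_smul' r x := by
    cases g <;> ext i <;> fin_cases i <;> simp [mul_add, mul_left_comm]

theorem lift_genAction_eq_of_qRel {x y : FreeAlgebra K QGen} (h : qRel K z x y) :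
    FreeAlgebra.lift K (genAction K z) x = FreeAlgebra.lift K (genAction K z) y := by
  refine LinearMap.ext fun w => ?_
  cases h <;>
    simp only [map_mul, map_add, map_smul, map_one, map_zero, FreeAlgebra.lift_ι_apply] <;>
    ext i <;> fin_cases i <;> simp [genAction]

/-- The left regular representation of the quiver algebra, in the coordinates with respect to
`e, f, a, b, c, b²`. -/
noncomputable def regularRep : QuiverAlg K z →ₐ[K] Module.End K (Fin 6 → K) :=
  RingQuot.liftAlgHom K
    ⟨FreeAlgebra.lift K (genAction K z), fun _ _ h => lift_genAction_eq_of_qRel K z h⟩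

theorem regularRep_gen (g : QGen) : regularRep K z (gen K z g) = genAction K z g :=
  (RingQuot.liftAlgHom_mkAlgHom_apply K (FreeAlgebra.lift K (genAction K z))
    (fun _ _ h => lift_genAction_eq_of_qRel K z h) (FreeAlgebra.ι K g)).trans
    (FreeAlgebra.lift_ι_apply _ g)

end RegularRepresentation

section Basis

/-- The six elements `e, f, a, b, c, b²` of the quiver algebra. -/
noncomputable def basisVec : Fin 6 → QuiverAlg K z :=
  ![gen K z .e, gen K z .f, gen K z .a, gen K z .b, gen K z .c, gen K z .b * gen K z .b]

/-- The element of the quiver algebra with given coordinates with respect to `e, f, a, b, c, b²`. -/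
noncomputable def ofCoord : (Fin 6 → K) →ₗ[K] QuiverAlg K z :=
  Fintype.linearCombination K (basisVec K z)

/-- The coordinates of `1 = e + f` with respect to `e, f, a, b, c, b²`. -/
def oneCoord : Fin 6 → K :=
  ![1, 1, 0, 0, 0, 0]

theorem ofCoord_apply (x : Fin 6 → K) :
    ofCoord K z x = x 0 • gen K z .e + x 1 • gen K z .f + x 2 • gen K z .a + x 3 • gen K z .b +
      x 4 • gen K z .c + x 5 • (gen K z .b * gen K z .b) := by
  simp [ofCoord, Fintype.linearCombination_apply, Fin.sum_univ_six, basisVec]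

theorem ofCoord_single (i : Fin 6) : ofCoord K z (Pi.single i 1) = basisVec K z i := by
  simp [ofCoord]

theorem ofCoord_oneCoord : ofCoord K z (oneCoord K) = 1 := by
  simp [ofCoord_apply, oneCoord, gen_e_add_gen_f]

theorem ofCoord_genAction (g : QGen) (x : Fin 6 → K) :
    ofCoord K z (genAction K z g x) = gen K z g * ofCoord K z x := by
  have gen_mul_b_mul_b : ∀ {h : QGen}, gen K z h * gen K z .b = 0 →
      gen K z h * (gen K z .b * gen K z .b) = 0 := fun hb => by rw [← mul_assoc, hb, zero_mul]
  have e_mul_b_mul_b : gen K z .e * (gen K z .b * gen K z .b) = gen K z .b * gen K z .b := by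
    rw [← mul_assoc, gen_mul_gen_of_target_eq (v := .e) (g := .b) rfl]
  rw [ofCoord_apply, ofCoord_apply]
  cases g <;>
    simp only [genAction, LinearMap.coe_mk, AddHom.coe_mk, Matrix.cons_val, mul_add,
      mul_smul_comm, gen_mul_gen_of_target_eq, gen_mul_gen_of_source_eq,
      gen_mul_gen_of_source_ne_target, ne_eq, reduceCtorEq, not_false_eq_true, QGen.source,
      QGen.target, gen_a_mul_gen_b, gen_b_mul_gen_c, gen_a_mul_gen_c, gen_c_mul_gen_a,
      gen_b_mul_gen_b_mul_gen_b, gen_mul_b_mul_b, e_mul_b_mul_b] <;>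
    module

theorem ofCoord_regularRep_oneCoord (x : QuiverAlg K z) :
    ofCoord K z (regularRep K z x (oneCoord K)) = x := by
  have ofCoord_regularRep_gen : ∀ g ∈ Set.range (gen K z), ∀ w,
      ofCoord K z (regularRep K z g w) = g • ofCoord K z w := by
    rintro _ ⟨g, rfl⟩ w
    rw [regularRep_gen, ofCoord_genAction, smul_eq_mul]
  rw [map_apply_eq_smul_of_adjoin_eq_top (adjoin_range_gen K z) (regularRep K z) (ofCoord K z)
    ofCoord_regularRep_gen, ofCoord_oneCoord, smul_eq_mul, mul_one]

theorem regularRep_ofCoord_oneCoord (x : Fin 6 → K) :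
    regularRep K z (ofCoord K z x) (oneCoord K) = x := by
  ext i
  fin_cases i <;> simp [ofCoord_apply, regularRep_gen, genAction, oneCoord]

/-- The quiver algebra in the coordinates with respect to `e, f, a, b, c, b²`. -/
noncomputable def coordEquiv : QuiverAlg K z ≃ₗ[K] (Fin 6 → K) :=
  .ofLinearMap (LinearMap.applyₗ (oneCoord K) ∘ₗ (regularRep K z).toLinearMap) (ofCoord K z)
    (LinearMap.ext (regularRep_ofCoord_oneCoord K z))
    (LinearMap.ext (ofCoord_regularRep_oneCoord K z))

end Basis

end QuiverAlg

/-- **Basis of the quiver algebra.**  The images of `e, f, a, b, c, b²` form a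
basis of `A` as a `K`-module; in particular `A` is a free `K`-module of
rank `6`. -/
theorem quiverAlg_basis (K : Type u) [CommRing K] (z : K) :
    ∃ bas : Module.Basis (Fin 6) K (QuiverAlg K z),
      ∀ i, bas i = ![gen K z QGen.e, gen K z QGen.f, gen K z QGen.a,
        gen K z QGen.b, gen K z QGen.c, gen K z QGen.b * gen K z QGen.b] i := by
  refine ⟨.ofEquivFun (QuiverAlg.coordEquiv K z), fun i => ?_⟩
  rw [Module.Basis.coe_ofEquivFun]
  exact QuiverAlg.ofCoord_single K z i
end
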